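/- Decomposition of the interaction potential into sliding localized potentials: Let v:ℝ³→[0,∞) be measurable and compactly supported, let f:ℝ³→ℝ be measurable and bounded with ∫_{ℝ³}v(z)f(z)dz = 8πa for some a∈ℝ. Let L>0 and χ∈C_c^∞(ℝ³) be real, even, with ∫χ²=1, supp χ ⊂ [-1/2,1/2]³, and such that (χ∗χ)(z/L)>0 for every z∈supp v. For u∈ℝ³ set χ_u(x)=χ(x/L−u), w_u(x,y)=χ_u(x)·v(x−y)/((χ∗χ)((x−y)/L))·χ_u(y), and for ρ>0 and N∈ℕ define 𝒲_u(x₁,…,x_N)=Σ_{1≤i<j≤N}w_u(x_i,x_j) − ρΣ_{i=1}^N∫_{ℝ³}w_u(x_i,y)f(x_i−y)dy. Then for every (x₁,…,x_N)∈(ℝ³)^N: ∫_{ℝ³} 𝒲_u(x₁,…,x_N) du = Σ_{1≤i<j≤N} v(x_i−x_j) − 8πNρa. -/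

import Mathlib

open MeasureTheory Filter Real

noncomputable section

abbrev Vec3 := Fin 3 → ℝ

/-- The convolution `(χ∗χ)(z) = ∫ χ(z−y)χ(y) dy`. -/
def convSelf (χ : Vec3 → ℝ) (z : Vec3) : ℝ := ∫ y : Vec3, χ (z - y) * χ y

/-- The unit cube `[-1/2,1/2]³`. -/
def cube : Set Vec3 := {x : Vec3 | ∀ k, x k ∈ Set.Icc (-(1 : ℝ)/2) (1/2)}

/-- The sliding localized two-body potential
`w_u(x,y) = χ(x/L−u) · v(x−y)/((χ∗χ)((x−y)/L)) · χ(y/L−u)`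
(the quotient being `0` whenever `v(x−y) = 0`, by the junk-value convention). -/
def wloc (χ v : Vec3 → ℝ) (L : ℝ) (u x y : Vec3) : ℝ :=
  χ (L⁻¹ • x - u) * (v (x - y) / convSelf χ (L⁻¹ • (x - y))) * χ (L⁻¹ • y - u)

/-- The localized renormalized potential
`𝒲_u = Σ_{i<j} w_u(x_i,x_j) − ρ Σ_i ∫ w_u(x_i,y) f(x_i−y) dy`. -/
def Wloc (χ v f : Vec3 → ℝ) (L ρ : ℝ) (N : ℕ) (x : Fin N → Vec3) (u : Vec3) : ℝ :=
  (∑ i : Fin N, ∑ j : Fin N, if i < j then wloc χ v L u (x i) (x j) else 0)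
    - ρ * ∑ i : Fin N, ∫ y : Vec3, wloc χ v L u (x i) y * f (x i - y)

/-! Since `∫ χ(a - u) χ(b - u) du = (χ ∗ χ)(a - b)` for even `χ`, integrating `w_u(x, y)` over `u`
cancels the denominator and leaves `v(x - y)`. The one-body term reduces to the same identity once
the integrals over `u` and `y` are exchanged. Fubini applies because Hölder's inequality bounds the
integral over `u` uniformly in `y`, and because `v f / (χ ∗ χ)(· / L)` is integrable: for
`χ ∈ L²` the function `χ ∗ χ` is continuous, hence bounded away from zero on the compact support
of `v`. -/

open scoped ENNReal Convolution

section Convolution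

variable {𝕜 G E E' F : Type*} [AddCommGroup G] [MeasurableSpace G] {μ : Measure G}
  [μ.IsAddLeftInvariant] [μ.IsNegInvariant] [NormedAddCommGroup E] [NormedAddCommGroup E']
  {f : G → E} {g : G → E'} {p q : ℝ≥0∞}

theorem memLp_comp_sub_left [MeasurableAdd G] [MeasurableNeg G] (hf : MemLp f p μ) (a : G) :
    MemLp (fun t => f (a - t)) p μ :=
  hf.comp_measurePreserving (Measure.measurePreserving_sub_left μ a)

theorem continuous_toLp_comp_sub_left [TopologicalSpace G] [IsTopologicalAddGroup G]
    [BorelSpace G] [IsLocallyFiniteMeasure μ] [μ.InnerRegularCompactLTTop] [Fact (1 ≤ p)]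
    [Fact (p ≠ ∞)] (hf : MemLp f p μ) :
    Continuous fun a => (memLp_comp_sub_left hf a).toLp := by
  have hf_neg : MemLp (fun t => f (-t)) p μ :=
    hf.comp_measurePreserving (Measure.measurePreserving_neg μ)
  have htranslate (a : G) :
      (memLp_comp_sub_left hf a).toLp = DomAddAct.mk (-a) +ᵥ hf_neg.toLp := by
    rw [DomAddAct.mk_vadd_toLp]
    refine MemLp.toLp_congr _ _ (.of_forall fun t => ?_)
    simp only [vadd_eq_add, neg_add, neg_neg, sub_eq_add_neg]
  simp only [htranslate]
  fun_prop

variable [NontriviallyNormedField 𝕜] [NormedSpace 𝕜 E] [NormedSpace 𝕜 E']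
  [NormedAddCommGroup F] [NormedSpace 𝕜 F] (B : E →L[𝕜] E' →L[𝕜] F)

theorem lpNorm_one_convolution_integrand_le [MeasurableAdd G] [MeasurableNeg G]
    [p.HolderConjugate q] (hf : MemLp f p μ) (hg : MemLp g q μ) (a : G) :
    lpNorm (fun t => B (f t) (g (a - t))) 1 μ ≤ ‖B‖ * lpNorm f p μ * lpNorm g q μ := by
  have hga := memLp_comp_sub_left hg a
  have hga_norm : eLpNorm (fun t => g (a - t)) q μ = eLpNorm g q μ :=
    eLpNorm_comp_measurePreserving hg.1 (Measure.measurePreserving_sub_left μ a)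
  rw [← toReal_eLpNorm (B.memLp_of_bilin 1 hf hga).1, ← toReal_eLpNorm hf.1,
    ← toReal_eLpNorm hg.1, ← coe_nnnorm B, ← ENNReal.coe_toReal, ← ENNReal.toReal_mul,
    ← ENNReal.toReal_mul, ← hga_norm]
  refine ENNReal.toReal_mono (by finiteness [hf.2, hga.2]) ?_
  exact eLpNorm_le_eLpNorm_mul_eLpNorm_of_nnnorm hf.1 hga.1 (B · ·) ‖B‖₊
    (.of_forall fun _ => B.le_opNorm₂ _ _)

theorem integrable_smul_convolution_integrand_prod {Y : Type*} [MeasurableSpace Y]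
    {ν : Measure Y} [SFinite ν] [MeasurableAdd₂ G] [MeasurableNeg G] [SFinite μ]
    [p.HolderConjugate q] {h : Y → 𝕜} {φ : Y → G} (hf : MemLp f p μ) (hg : MemLp g q μ)
    (hh : Integrable h ν) (hφ : Measurable φ) :
    Integrable (fun z : G × Y => h z.2 • B (f z.1) (g (φ z.2 - z.1))) (μ.prod ν) := by
  have hsub : Measure.QuasiMeasurePreserving (fun z : G × Y => φ z.2 - z.1) (μ.prod ν) μ :=
    QuasiMeasurePreserving.prod_of_left (by fun_prop) (.of_forall fun y =>
      (Measure.measurePreserving_sub_left μ (φ y)).quasiMeasurePreserving)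
  have hmeas : AEStronglyMeasurable
      (fun z : G × Y => h z.2 • B (f z.1) (g (φ z.2 - z.1))) (μ.prod ν) :=
    hh.1.comp_snd.smul
      (B.aestronglyMeasurable_comp₂ hf.1.comp_fst (hg.1.comp_quasiMeasurePreserving hsub))
  have hsection (y : Y) : MemLp (fun t => B (f t) (g (φ y - t))) 1 μ :=
    B.memLp_of_bilin 1 hf (memLp_comp_sub_left hg (φ y))
  refine (integrable_prod_iff' hmeas).2
    ⟨.of_forall fun y => (memLp_one_iff_integrable.1 (hsection y)).smul (h y), ?_⟩
  refine (hh.norm.mul_const (‖B‖ * lpNorm f p μ * lpNorm g q μ)).mono'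
    hmeas.norm.prod_swap.integral_prod_right' (.of_forall fun y => ?_)
  calc ‖∫ t, ‖h y • B (f t) (g (φ y - t))‖ ∂μ‖
      = ‖h y‖ * lpNorm (fun t => B (f t) (g (φ y - t))) 1 μ := by
        rw [Real.norm_of_nonneg (by positivity), lpNorm_one_eq_integral_norm (hsection y).1]
        simp only [norm_smul, integral_const_mul]
    _ ≤ ‖h y‖ * (‖B‖ * lpNorm f p μ * lpNorm g q μ) := by
        gcongr
        exact lpNorm_one_convolution_integrand_le B hf hg (φ y)

variable [NormedSpace ℝ F]

theorem integral_comp_sub_left_eq_convolution [MeasurableAdd G] [MeasurableNeg G]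
    (hg : Function.Even g) (a b : G) :
    ∫ u, B (f (a - u)) (g (b - u)) ∂μ = (f ⋆[B, μ] g) (a - b) := by
  rw [← integral_sub_left_eq_self _ μ a, convolution_def]
  refine integral_congr_ae (.of_forall fun u => ?_)
  have hreflect : g (b - (a - u)) = g (a - b - u) := by
    rw [← hg]
    congr 1
    abel
  simp only [sub_sub_cancel, hreflect]

theorem continuous_convolution_of_memLp [TopologicalSpace G] [IsTopologicalAddGroup G]
    [BorelSpace G] [IsLocallyFiniteMeasure μ] [μ.InnerRegularCompactLTTop] [SMulCommClass ℝ 𝕜 F]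
    [CompleteSpace F] [p.HolderConjugate q] (hf : MemLp f p μ) (hg : MemLp g q μ) (hq : q ≠ ∞) :
    Continuous (f ⋆[B, μ] g) := by
  have : Fact (1 ≤ p) := ⟨ENNReal.HolderConjugate.one_le p q⟩
  have : Fact (1 ≤ q) := ⟨ENNReal.HolderConjugate.one_le q p⟩
  have : Fact (q ≠ ∞) := ⟨hq⟩
  have hpairing : f ⋆[B, μ] g =
      fun a => B.lpPairing μ p q hf.toLp (memLp_comp_sub_left hg a).toLp := by
    ext a
    rw [ContinuousLinearMap.lpPairing_eq_integral, convolution_def]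
    refine integral_congr_ae ?_
    filter_upwards [hf.coeFn_toLp, (memLp_comp_sub_left hg a).coeFn_toLp] with t hft hgt
    rw [hft, hgt]
  rw [hpairing]
  exact (B.lpPairing μ p q hf.toLp).continuous.comp (continuous_toLp_comp_sub_left hg)

end Convolution

theorem integrable_mul_of_continuousOn_of_support_subset {X R : Type*} [TopologicalSpace X]
    [T2Space X] [MeasurableSpace X] [OpensMeasurableSpace X] {μ : Measure X} [NormedRing R]
    [SecondCountableTopologyEither X R] {g c : X → R} {K : Set X} (hg : Integrable g μ)
    (hc : ContinuousOn c K) (hK : IsCompact K) (hgK : Function.support g ⊆ K) :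
    Integrable (fun x => g x * c x) μ := by
  rw [← integrableOn_iff_integrable_of_support_subset
    ((Function.support_mul_subset_left g c).trans hgK)]
  exact hg.integrableOn.mul_continuousOn hc hK

section SlidingPotential

variable {χ v f : Vec3 → ℝ} {L : ℝ}

theorem isCompact_cube : IsCompact cube := by
  have hcube : cube = Set.univ.pi fun _ => Set.Icc (-(1 : ℝ) / 2) (1 / 2) := by
    ext x
    simp only [cube, Set.mem_ofPred_eq, Set.mem_univ_pi]
  rw [hcube]
  exact isCompact_univ_pi fun _ => isCompact_Icc

theorem convSelf_eq_convolution : convSelf χ = χ ⋆[.mul ℝ ℝ] χ :=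
  funext fun _ => convolution_mul_swap.symm

theorem continuous_convSelf (hχ : MemLp χ 2) : Continuous (convSelf χ) := by
  rw [convSelf_eq_convolution]
  exact continuous_convolution_of_memLp _ hχ hχ ENNReal.ofNat_ne_top

theorem wloc_eq_mul (u x y : Vec3) : wloc χ v L u x y =
    v (x - y) / convSelf χ (L⁻¹ • (x - y)) * (χ (L⁻¹ • x - u) * χ (L⁻¹ • y - u)) := by
  rw [wloc]
  ring

theorem integrable_wloc (hχ : MemLp χ 2) (x y : Vec3) : Integrable fun u => wloc χ v L u x y := by
  simp only [wloc_eq_mul]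
  exact ((memLp_comp_sub_left hχ _).integrable_mul (memLp_comp_sub_left hχ _)).const_mul _

theorem integral_wloc (hχ : Function.Even χ)
    (hconv : ∀ z ∈ Function.support v, convSelf χ (L⁻¹ • z) ≠ 0) (x y : Vec3) :
    ∫ u, wloc χ v L u x y = v (x - y) := by
  have hχχ : ∫ u, χ (L⁻¹ • x - u) * χ (L⁻¹ • y - u) = convSelf χ (L⁻¹ • (x - y)) := by
    rw [convSelf_eq_convolution, smul_sub]
    exact integral_comp_sub_left_eq_convolution (.mul ℝ ℝ) hχ _ _
  simp only [wloc_eq_mul, integral_const_mul, hχχ]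
  exact div_mul_cancel_of_imp fun hzero => not_not.1 fun hv => hconv _ hv hzero

theorem integrable_wloc_mul (hχ : MemLp χ 2) (hv : HasCompactSupport v)
    (hvf : Integrable fun z => v z * f z) (hconv : ∀ z ∈ tsupport v, convSelf χ (L⁻¹ • z) ≠ 0)
    (x : Vec3) : Integrable fun z : Vec3 × Vec3 => wloc χ v L z.1 x z.2 * f (x - z.2) := by
  have hquot : Integrable fun z => v z * f z * (convSelf χ (L⁻¹ • z))⁻¹ :=
    integrable_mul_of_continuousOn_of_support_subset hvf
      (((continuous_convSelf hχ).comp (continuous_const_smul L⁻¹)).continuousOn.inv₀ hconv)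
      hv.isCompact ((Function.support_mul_subset_left v f).trans (subset_tsupport v))
  refine (integrable_smul_convolution_integrand_prod (.mul ℝ ℝ) (memLp_comp_sub_left hχ (L⁻¹ • x))
    hχ (hquot.comp_sub_left x) (measurable_const_smul L⁻¹)).congr (.of_forall fun z => ?_)
  simp only [wloc, smul_eq_mul, ContinuousLinearMap.mul_apply']
  ring

theorem integral_integral_wloc_mul (hχ : MemLp χ 2) (hχeven : Function.Even χ)
    (hv : HasCompactSupport v) (hvf : Integrable fun z => v z * f z)
    (hconv : ∀ z ∈ tsupport v, convSelf χ (L⁻¹ • z) ≠ 0) (x : Vec3) :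
    ∫ u, ∫ y, wloc χ v L u x y * f (x - y) = ∫ z, v z * f z := by
  rw [integral_integral_swap (integrable_wloc_mul hχ hv hvf hconv x)]
  simp only [integral_mul_const, integral_wloc hχeven fun z hz => hconv z (subset_tsupport v hz)]
  exact integral_sub_left_eq_self (fun z => v z * f z) volume x

theorem interaction_decomposition_general (_hL : L ≠ 0) (hχ : MemLp χ 2)
    (hχeven : Function.Even χ) (hv : HasCompactSupport v) (hvf : Integrable fun z => v z * f z)
    (hconv : ∀ z ∈ tsupport v, convSelf χ (L⁻¹ • z) ≠ 0) (ρ : ℝ) (N : ℕ) (x : Fin N → Vec3) :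
    ∫ u, Wloc χ v f L ρ N x u
      = (∑ i : Fin N, ∑ j : Fin N, if i < j then v (x i - x j) else 0)
        - N * ρ * ∫ z, v z * f z := by
  have hpair (i : Fin N) : Integrable fun u => ∑ j with i < j, wloc χ v L u (x i) (x j) :=
    integrable_finsetSum _ fun j _ => integrable_wloc hχ (x i) (x j)
  have hone (i : Fin N) : Integrable fun u => ∫ y, wloc χ v L u (x i) y * f (x i - y) :=
    (integrable_wloc_mul hχ hv hvf hconv (x i)).integral_prod_left
  have hpair_integral (i : Fin N) :
      ∫ u, ∑ j with i < j, wloc χ v L u (x i) (x j) = ∑ j with i < j, v (x i - x j) := by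
    rw [integral_finsetSum _ fun j _ => integrable_wloc hχ (x i) (x j)]
    simp only [integral_wloc hχeven fun z hz => hconv z (subset_tsupport v hz)]
  simp only [Wloc, ← Finset.sum_filter]
  rw [integral_sub (integrable_finsetSum _ fun i _ => hpair i)
      ((integrable_finsetSum _ fun i _ => hone i).const_mul ρ), integral_const_mul,
    integral_finsetSum _ fun i _ => hpair i, integral_finsetSum _ fun i _ => hone i]
  simp only [hpair_integral, integral_integral_wloc_mul hχ hχeven hv hvf hconv,
    Finset.sum_const, Finset.card_univ, Fintype.card_fin, nsmul_eq_mul]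
  ring

end SlidingPotential

/-- **Decomposition of the interaction potential into sliding localized potentials
(Brietzke–Fournais–Solovej).** If `∫ v f = 8πa` and `χ` is a smooth even
localization function supported in the unit cube with `∫χ² = 1` and
`(χ∗χ)(z/L) > 0` on the support of `v`, then
`∫ 𝒲_u du = Σ_{i<j} v(x_i−x_j) − 8πNρa`. -/
theorem interaction_decomposition
    (v : Vec3 → ℝ) (hvmeas : Measurable v) (hvpos : ∀ z, 0 ≤ v z)
    (hvsupp : HasCompactSupport v)
    (f : Vec3 → ℝ) (hfmeas : Measurable f) (hfbdd : ∃ M, ∀ z, |f z| ≤ M)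
    (a : ℝ) (hvf_int : Integrable (fun z : Vec3 => v z * f z))
    (hvf : ∫ z : Vec3, v z * f z = 8 * π * a)
    (L : ℝ) (hL : 0 < L)
    (χ : Vec3 → ℝ) (hχsm : ContDiff ℝ (⊤ : ℕ∞) χ) (hχeven : ∀ z, χ (-z) = χ z)
    (hχnorm : ∫ z : Vec3, (χ z) ^ 2 = 1) (hχsupp : tsupport χ ⊆ cube)
    (hconv : ∀ z ∈ tsupport v, 0 < convSelf χ (L⁻¹ • z))
    (ρ : ℝ) (N : ℕ) (x : Fin N → Vec3) :
    ∫ u : Vec3, Wloc χ v f L ρ N x u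
      = (∑ i : Fin N, ∑ j : Fin N, if i < j then v (x i - x j) else 0)
        - 8 * π * N * ρ * a := by
  have hχ : MemLp χ 2 := hχsm.continuous.memLp_of_hasCompactSupport
    (isCompact_cube.of_isClosed_subset (isClosed_tsupport χ) hχsupp)
  rw [interaction_decomposition_general hL.ne' hχ hχeven hvsupp hvf_int
    (fun z hz => (hconv z hz).ne') ρ N x, hvf]
  ring
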